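/- Let p ≥ 1, let φ be a Bernstein function with φ(0) = 0 and φ(∞) = ∞, let Ψ be its inverse, and let (μ_t)_{t>0} be the family of marginal laws of the subordinator associated with φ. If the function t ↦ t·∫ x^{−p} μ_t(dx) is a Stieltjes transform on (0,∞), then Ψ^p belongs to Lle(0,∞), i.e. Ψ(λ)^p admits a representation Ψ(λ)^p = βλ + (γ²/2)λ² + ∫_{(0,∞)} (e^{−λx} − 1 + λx/(1+x²)) ν(dx) with γ ≥ 0, β ∈ ℝ and ∫ min(x²,1) ν(dx) < ∞; equivalently, λ ↦ φ(λ^{1/p}) is the Bernstein function of the first-passage-time process of a spectrally negative Lévy process with Lévy–Laplace exponent Ψ^p. -/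

import Mathlib

open MeasureTheory Set Filter

/-- A Bernstein function on `(0,∞)`: a nonnegative smooth function whose derivatives satisfy
`(−1)^{n−1} f^{(n)} ≥ 0` on `(0,∞)` for every `n ≥ 1`. -/
def IsBernsteinFn (f : ℝ → ℝ) : Prop :=
  (∀ x : ℝ, 0 < x → 0 ≤ f x) ∧ ContDiffOn ℝ (⊤ : ℕ∞) f (Ioi 0) ∧
    ∀ n : ℕ, 1 ≤ n → ∀ x : ℝ, 0 < x → 0 ≤ (-1 : ℝ) ^ (n - 1) * iteratedDeriv n f x

/-- A Stieltjes transform on `(0,∞)`: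
`f(λ) = d + q/λ + ∫_{(0,∞)} (λ+u)⁻¹ Δ(du)` with `d, q ≥ 0` and `Δ` a Borel measure on
`(0,∞)` integrating `(1+u)⁻¹`. -/
def IsStieltjesFn (f : ℝ → ℝ) : Prop :=
  ∃ d q : ℝ, 0 ≤ d ∧ 0 ≤ q ∧ ∃ Δ : Measure ℝ, Δ {x | x ≤ 0} = 0 ∧
    (∫⁻ u, ENNReal.ofReal ((1 + u)⁻¹) ∂Δ) < ⊤ ∧
    ∀ l : ℝ, 0 < l → f l = d + q / l + ∫ u, (l + u)⁻¹ ∂Δ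

/-!
Write `f(t) = t ∫ x^{-p} μ_t(dx)`. Since `Ψ` inverts `φ`, the layer-cake formula followed by the
Gamma integral shows that the Laplace transform of `Ψ^p` at `t` is `Γ(p+1) f(t) / t²`. On the other
hand `t⁻² (t + u)⁻¹` is the Laplace transform of `s ↦ (e^{-su} - 1 + su) / u²`, so if `f` is a
Stieltjes transform with measure `Δ`, then `f(t) / t²` is the Laplace transform of a Lévy–Laplace
exponent with Lévy measure `u⁻² Δ(du)`. Laplace transforms determine continuous functions, so `Ψ^p`
is, up to the factor `Γ(p+1)`, this exponent.
-/

open ProbabilityTheory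
open scoped ENNReal Topology

section Uniqueness

theorem ext_of_mgf_id_eventuallyEq {M N : Measure ℝ} [IsFiniteMeasure M] [IsFiniteMeasure N]
    (hM : 0 ∈ interior (integrableExpSet id M)) (hN : 0 ∈ interior (integrableExpSet id N))
    (h : mgf id M =ᶠ[𝓝 0] mgf id N) : M = N := by
  set U := interior (integrableExpSet id M) ∩ interior (integrableExpSet id N)
  have hU : Convex ℝ U := convex_integrableExpSet.interior.inter convex_integrableExpSet.interior
  have hM_analytic : AnalyticOnNhd ℂ (complexMGF id M) {z | z.re ∈ U} :=
    analyticOnNhd_complexMGF.mono fun _ hz => hz.1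
  have hN_analytic : AnalyticOnNhd ℂ (complexMGF id N) {z | z.re ∈ U} :=
    analyticOnNhd_complexMGF.mono fun _ hz => hz.2
  have h_real : ∃ᶠ x : ℝ in 𝓝[≠] 0, complexMGF id M x = complexMGF id N x := by
    refine (h.filter_mono nhdsWithin_le_nhds).frequently.mono fun x hx => ?_
    rw [complexMGF_ofReal, complexMGF_ofReal, hx]
  have h_ofReal : Tendsto ((↑) : ℝ → ℂ) (𝓝[≠] 0) (𝓝[≠] ((0 : ℝ) : ℂ)) :=
    Complex.continuous_ofReal.continuousWithinAt.tendsto_nhdsWithin fun x hx => by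
      simpa using hx
  have h_strip : EqOn (complexMGF id M) (complexMGF id N) {z | z.re ∈ U} :=
    hM_analytic.eqOn_of_preconnected_of_frequently_eq hN_analytic
      (hU.linear_preimage Complex.reLm).isPreconnected (z₀ := ((0 : ℝ) : ℂ)) ⟨hM, hN⟩
      (h_ofReal.frequently h_real)
  refine Measure.ext_of_charFun (funext fun t => ?_)
  rw [← complexMGF_id_mul_I, ← complexMGF_id_mul_I]
  exact h_strip (by simpa [U] using And.intro hM hN)

theorem integrable_exp_mul_iff_lintegral_ne_top {M : Measure ℝ} {t : ℝ} :
    Integrable (fun x => Real.exp (t * x)) M ↔ ∫⁻ x, ENNReal.ofReal (Real.exp (t * x)) ∂M ≠ ∞ :=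
  (lintegral_ofReal_ne_top_iff_integrable (by fun_prop)
    (ae_of_all _ fun _ => (Real.exp_pos _).le)).symm

theorem mgf_id_eq_toReal_lintegral (M : Measure ℝ) (t : ℝ) :
    mgf id M t = (∫⁻ x, ENNReal.ofReal (Real.exp (t * x)) ∂M).toReal :=
  integral_eq_lintegral_of_nonneg_ae (ae_of_all _ fun _ => (Real.exp_pos _).le) (by fun_prop)

theorem lintegral_exp_mul_withDensity_exp_mul (M : Measure ℝ) (a t : ℝ) :
    ∫⁻ x, ENNReal.ofReal (Real.exp (t * x))
        ∂(M.withDensity fun x => ENNReal.ofReal (Real.exp (a * x))) =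
      ∫⁻ x, ENNReal.ofReal (Real.exp ((a + t) * x)) ∂M := by
  rw [lintegral_withDensity_eq_lintegral_mul _ (by fun_prop) (by fun_prop)]
  simp only [Pi.mul_apply, ← ENNReal.ofReal_mul (Real.exp_pos _).le, ← Real.exp_add, add_mul]

theorem zero_mem_interior_integrableExpSet_withDensity_exp_mul {M : Measure ℝ} {a : ℝ}
    (hfin : ∀ᶠ t in 𝓝 a, ∫⁻ x, ENNReal.ofReal (Real.exp (t * x)) ∂M ≠ ∞) :
    0 ∈ interior (integrableExpSet id
      (M.withDensity fun x => ENNReal.ofReal (Real.exp (a * x)))) := by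
  rw [← map_add_left_nhds_zero a, eventually_map] at hfin
  rw [mem_interior_iff_mem_nhds]
  filter_upwards [hfin] with t ht
  refine integrable_exp_mul_iff_lintegral_ne_top.2 ?_
  rwa [lintegral_exp_mul_withDensity_exp_mul]

theorem ext_of_lintegral_exp_mul_eventuallyEq {M N : Measure ℝ} {a : ℝ}
    (hfin : ∀ᶠ t in 𝓝 a, ∫⁻ x, ENNReal.ofReal (Real.exp (t * x)) ∂M ≠ ∞)
    (h : ∀ᶠ t in 𝓝 a, ∫⁻ x, ENNReal.ofReal (Real.exp (t * x)) ∂M =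
      ∫⁻ x, ENNReal.ofReal (Real.exp (t * x)) ∂N) : M = N := by
  have hfin' : ∀ᶠ t in 𝓝 a, ∫⁻ x, ENNReal.ofReal (Real.exp (t * x)) ∂N ≠ ∞ := by
    filter_upwards [hfin, h] with t ht hMN
    rwa [← hMN]
  let tilt : ℝ → ℝ≥0∞ := fun x => ENNReal.ofReal (Real.exp (a * x))
  have h_finite {L : Measure ℝ}
      (hL : ∀ᶠ t in 𝓝 a, ∫⁻ x, ENNReal.ofReal (Real.exp (t * x)) ∂L ≠ ∞) :
      IsFiniteMeasure (L.withDensity tilt) :=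
    isFiniteMeasure_withDensity hL.self_of_nhds
  have := h_finite hfin
  have := h_finite hfin'
  have h_tilted : M.withDensity tilt = N.withDensity tilt := by
    refine ext_of_mgf_id_eventuallyEq
      (zero_mem_interior_integrableExpSet_withDensity_exp_mul hfin)
      (zero_mem_interior_integrableExpSet_withDensity_exp_mul hfin') ?_
    rw [← map_add_left_nhds_zero a, eventually_map] at h
    filter_upwards [h] with t ht
    rw [mgf_id_eq_toReal_lintegral, mgf_id_eq_toReal_lintegral,
      lintegral_exp_mul_withDensity_exp_mul, lintegral_exp_mul_withDensity_exp_mul, ht]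
  have h_untilt (L : Measure ℝ) : (L.withDensity tilt).withDensity tilt⁻¹ = L :=
    withDensity_inv_same (by fun_prop) (ae_of_all _ fun x => by simp [tilt, Real.exp_pos])
      (ae_of_all _ fun _ => ENNReal.ofReal_ne_top)
  rw [← h_untilt M, h_tilted, h_untilt]

end Uniqueness

section LaplaceTransform

/-- The Laplace transform `∫_{(0,∞)} e^{-ts} F(s) ds` as an extended nonnegative number; only the
positive part of `F` contributes. -/
noncomputable def laplaceLIntegral (F : ℝ → ℝ) (t : ℝ) : ℝ≥0∞ :=
  ∫⁻ s in Ioi 0, ENNReal.ofReal (Real.exp (-(t * s)) * F s)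

variable {F G : ℝ → ℝ} {t : ℝ}

theorem laplaceLIntegral_add (hF : AEMeasurable F (volume.restrict (Ioi 0)))
    (hF0 : ∀ s, 0 < s → 0 ≤ F s) (hG0 : ∀ s, 0 < s → 0 ≤ G s) (t : ℝ) :
    laplaceLIntegral (fun s => F s + G s) t = laplaceLIntegral F t + laplaceLIntegral G t := by
  simp only [laplaceLIntegral]
  rw [← lintegral_add_left' (by fun_prop)]
  refine setLIntegral_congr_fun measurableSet_Ioi fun s hs => ?_
  have := hF0 s hs
  have := hG0 s hs
  rw [mul_add, ENNReal.ofReal_add (by positivity) (by positivity)]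

theorem laplaceLIntegral_const_mul {c : ℝ} (hc : 0 ≤ c) (F : ℝ → ℝ) (t : ℝ) :
    laplaceLIntegral (fun s => c * F s) t = ENNReal.ofReal c * laplaceLIntegral F t := by
  simp only [laplaceLIntegral, mul_left_comm _ c, ENNReal.ofReal_mul hc]
  exact lintegral_const_mul' _ _ ENNReal.ofReal_ne_top

theorem laplaceLIntegral_exp_neg_mul (F : ℝ → ℝ) (t u : ℝ) :
    laplaceLIntegral (fun s => Real.exp (-(s * u)) * F s) t = laplaceLIntegral F (t + u) := by
  simp only [laplaceLIntegral, ← mul_assoc, ← Real.exp_add]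
  refine lintegral_congr fun s => ?_
  ring_nf

theorem laplaceLIntegral_rpow_sub_one {p : ℝ} (hp : 0 < p) (ht : 0 < t) :
    laplaceLIntegral (fun s => s ^ (p - 1)) t = ENNReal.ofReal (Real.Gamma p * t ^ (-p)) := by
  have := Real.Gamma_pos_of_pos hp
  have h_integral := Real.integral_rpow_mul_exp_neg_mul_Ioi hp ht
  simp only [laplaceLIntegral, mul_comm (Real.exp _)]
  rw [← ofReal_integral_eq_lintegral_ofReal
    (Integrable.of_integral_ne_zero (by rw [h_integral]; positivity)), h_integral, one_div,
    Real.inv_rpow ht.le, ← Real.rpow_neg ht.le, mul_comm]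
  filter_upwards [ae_restrict_mem measurableSet_Ioi] with s hs
  have : 0 < s := hs
  positivity

theorem laplaceLIntegral_pow (n : ℕ) (ht : 0 < t) :
    laplaceLIntegral (fun s => s ^ n) t = ENNReal.ofReal (n.factorial / t ^ (n + 1)) := by
  have h := laplaceLIntegral_rpow_sub_one (p := n + 1) (by positivity) ht
  simp only [add_sub_cancel_right, Real.rpow_natCast, Real.Gamma_nat_eq_factorial,
    Real.rpow_neg ht.le] at h
  rw [h, div_eq_mul_inv, ← Nat.cast_succ, Real.rpow_natCast]

theorem lintegral_exp_mul_withDensity_ofReal (hF : AEMeasurable F (volume.restrict (Ioi 0)))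
    (t : ℝ) :
    ∫⁻ x, ENNReal.ofReal (Real.exp (t * x))
        ∂((volume.restrict (Ioi 0)).withDensity fun s => ENNReal.ofReal (F s)) =
      laplaceLIntegral F (-t) := by
  rw [lintegral_withDensity_eq_lintegral_mul₀ hF.ennreal_ofReal (by fun_prop), laplaceLIntegral]
  refine lintegral_congr fun s => ?_
  rw [Pi.mul_apply, mul_comm, ← ENNReal.ofReal_mul (Real.exp_pos _).le, neg_mul, neg_neg]

theorem eqOn_Ici_of_laplaceLIntegral_eventuallyEq {a : ℝ} (hF : ContinuousOn F (Ici 0))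
    (hG : ContinuousOn G (Ici 0)) (hF0 : ∀ s, 0 < s → 0 ≤ F s) (hG0 : ∀ s, 0 < s → 0 ≤ G s)
    (hfin : ∀ᶠ t in 𝓝 a, laplaceLIntegral F t ≠ ∞)
    (h : laplaceLIntegral F =ᶠ[𝓝 a] laplaceLIntegral G) : EqOn F G (Ici 0) := by
  have hmeas {K : ℝ → ℝ} (hK : ContinuousOn K (Ici 0)) :
      AEMeasurable K (volume.restrict (Ioi 0)) :=
    (hK.mono Ioi_subset_Ici_self).aemeasurable measurableSet_Ioi
  have h_neg : Tendsto (fun t : ℝ => -t) (𝓝 (-a)) (𝓝 a) := by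
    simpa using (continuous_neg (G := ℝ)).tendsto (-a)
  have h_ae : (fun s => ENNReal.ofReal (F s)) =ᵐ[volume.restrict (Ioi 0)]
      fun s => ENNReal.ofReal (G s) := by
    refine (withDensity_eq_iff_of_sigmaFinite (hmeas hF).ennreal_ofReal
      (hmeas hG).ennreal_ofReal).1 <| ext_of_lintegral_exp_mul_eventuallyEq (a := -a) ?_ ?_
    · simpa only [lintegral_exp_mul_withDensity_ofReal (hmeas hF)] using h_neg.eventually hfin
    · simpa only [lintegral_exp_mul_withDensity_ofReal (hmeas hF),
        lintegral_exp_mul_withDensity_ofReal (hmeas hG)] using h_neg.eventually h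
  refine Measure.eqOn_of_ae_eq (μ := volume) ?_ hF hG (by simp [closure_Ioi])
  rw [← restrict_Ioi_eq_restrict_Ici]
  filter_upwards [h_ae, ae_restrict_mem measurableSet_Ioi] with s hs hs_pos
  exact (ENNReal.ofReal_eq_ofReal_iff (hF0 s hs_pos) (hG0 s hs_pos)).1 hs

end LaplaceTransform

section InverseFunction

theorem continuousOn_of_strictMonoOn_of_ordConnected_image {α β : Type*} [LinearOrder α]
    [TopologicalSpace α] [OrderTopology α] [LinearOrder β] [TopologicalSpace β] [OrderTopology β]
    {f : α → β} {s : Set α} (hf : StrictMonoOn f s) [s.OrdConnected] [(f '' s).OrdConnected] :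
    ContinuousOn f s :=
  continuousOn_iff_continuous_domRestrict.2 <|
    continuous_subtype_val.comp (hf.orderIso f s).continuous

theorem continuousOn_of_strictMonoOn_of_invOn {α β : Type*} [LinearOrder α]
    [TopologicalSpace α] [OrderTopology α] [LinearOrder β] [TopologicalSpace β] [OrderTopology β]
    {f : α → β} {g : β → α} {s : Set α} {t : Set β} [s.OrdConnected] [t.OrdConnected]
    (hf : StrictMonoOn f s) (hbij : BijOn f s t) (hinv : InvOn g f s t) : ContinuousOn g t := by
  have hg : BijOn g t s := hbij.symm hinv.symm
  have : (g '' t).OrdConnected := hg.image_eq ▸ ‹s.OrdConnected›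
  refine continuousOn_of_strictMonoOn_of_ordConnected_image fun a ha b hb hab => ?_
  rwa [← hf.lt_iff_lt (hg.mapsTo ha) (hg.mapsTo hb), hinv.2 ha, hinv.2 hb]

end InverseFunction

section LaplaceExponent

/-- `φ` is the Laplace exponent of `M`: the measure `M` is carried by `(0,∞)` and
`∫ e^{-lx} M(dx) = e^{-φ(l)}` for `l ≥ 0`. -/
structure HasLaplaceExponent (M : Measure ℝ) (φ : ℝ → ℝ) : Prop where
  ae_pos : ∀ᵐ x ∂M, 0 < x
  integral_exp : ∀ l, 0 ≤ l → ∫ x, Real.exp (-l * x) ∂M = Real.exp (-φ l)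

namespace HasLaplaceExponent

variable {M : Measure ℝ} {φ : ℝ → ℝ}

theorem integrable_exp (h : HasLaplaceExponent M φ) {l : ℝ} (hl : 0 ≤ l) :
    Integrable (fun x => Real.exp (-l * x)) M :=
  Integrable.of_integral_ne_zero (by rw [h.integral_exp l hl]; exact (Real.exp_pos _).ne')

theorem lintegral_exp (h : HasLaplaceExponent M φ) {l : ℝ} (hl : 0 ≤ l) :
    ∫⁻ x, ENNReal.ofReal (Real.exp (-l * x)) ∂M = ENNReal.ofReal (Real.exp (-φ l)) := by
  rw [← h.integral_exp l hl, ofReal_integral_eq_lintegral_ofReal (h.integrable_exp hl)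
    (ae_of_all _ fun _ => (Real.exp_pos _).le)]

theorem monotoneOn (h : HasLaplaceExponent M φ) : MonotoneOn φ (Ici 0) := by
  intro a ha b hb hab
  rw [← neg_le_neg_iff, ← Real.exp_le_exp, ← h.integral_exp a ha, ← h.integral_exp b hb]
  refine integral_mono_ae (h.integrable_exp hb) (h.integrable_exp ha) ?_
  filter_upwards [h.ae_pos] with x hx
  gcongr

theorem eq_neg_log (h : HasLaplaceExponent M φ) {l : ℝ} (hl : 0 ≤ l) :
    φ l = -Real.log (∫ x, Real.exp (-l * x) ∂M) := by
  rw [h.integral_exp l hl, Real.log_exp, neg_neg]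

theorem ae_norm_exp_le_one (h : HasLaplaceExponent M φ) {l : ℝ} (hl : 0 ≤ l) :
    ∀ᵐ x ∂M, ‖Real.exp (-l * x)‖ ≤ 1 := by
  filter_upwards [h.ae_pos] with x hx
  rw [Real.norm_of_nonneg (Real.exp_pos _).le, Real.exp_le_one_iff, neg_mul, neg_nonpos]
  positivity

variable [IsProbabilityMeasure M]

theorem apply_zero (h : HasLaplaceExponent M φ) : φ 0 = 0 := by
  simp [h.eq_neg_log le_rfl]

theorem continuousOn (h : HasLaplaceExponent M φ) : ContinuousOn φ (Ici 0) := by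
  have h_integral : ContinuousOn (fun l : ℝ => ∫ x, Real.exp (-l * x) ∂M) (Ici 0) :=
    continuousOn_of_dominated (fun _ _ => by fun_prop) (fun _ hl => h.ae_norm_exp_le_one hl)
      (integrable_const 1) (ae_of_all _ fun _ => by fun_prop)
  refine (h_integral.log fun l hl => ?_).neg.congr fun l hl => h.eq_neg_log hl
  rw [h.integral_exp l hl]
  exact (Real.exp_pos _).ne'

theorem tendsto_atTop (h : HasLaplaceExponent M φ) : Tendsto φ atTop atTop := by
  have h_integral : Tendsto (fun l : ℝ => ∫ x, Real.exp (-l * x) ∂M) atTop (𝓝 0) := by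
    rw [← integral_zero ℝ ℝ (μ := M)]
    refine tendsto_integral_filter_of_dominated_convergence (fun _ => 1)
      (Eventually.of_forall fun _ => by fun_prop) ?_ (integrable_const 1) ?_
    · filter_upwards [eventually_ge_atTop 0] with l hl using h.ae_norm_exp_le_one hl
    · filter_upwards [h.ae_pos] with x hx
      simpa using tendsto_id.atTop_mul_const hx
  have h_exp : Tendsto (fun l => Real.exp (-φ l)) atTop (𝓝[>] 0) := by
    refine tendsto_nhdsWithin_iff.2 ⟨h_integral.congr' ?_, .of_forall fun _ => Real.exp_pos _⟩
    filter_upwards [eventually_ge_atTop 0] with l hl using h.integral_exp l hl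
  simpa only [Function.comp_def, Real.log_exp, tendsto_neg_atBot_iff] using
    Real.tendsto_log_nhdsGT_zero.comp h_exp

theorem mapsTo (h : HasLaplaceExponent M φ) : MapsTo φ (Ici 0) (Ici 0) := fun l hl => by
  simpa [h.apply_zero] using h.monotoneOn self_mem_Ici hl hl

theorem surjOn (h : HasLaplaceExponent M φ) : SurjOn φ (Ici 0) (Ici 0) := by
  have := isPreconnected_Ici.intermediate_value_Ici self_mem_Ici
    (le_principal_iff.2 (Ici_mem_atTop 0)) h.continuousOn h.tendsto_atTop
  rwa [h.apply_zero] at this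

end HasLaplaceExponent

end LaplaceExponent

section NegativeMoments

variable {p t : ℝ} {φ Ψ : ℝ → ℝ}

/-- Layer-cake formula for `e^{-ts} ds`, whose mass of `{s | l < Ψ s} = (φ l, ∞)` is
`e^{-tφ(l)} / t`. -/
theorem laplaceLIntegral_rpow_eq_lintegral_of_lt_iff_lt (hp : 0 < p) (ht : 0 < t)
    (hΨ : AEMeasurable Ψ (volume.restrict (Ioi 0))) (hΨ0 : ∀ s, 0 < s → 0 ≤ Ψ s)
    (hφ0 : ∀ l, 0 < l → 0 ≤ φ l) (hlt : ∀ l s, 0 < l → 0 < s → (l < Ψ s ↔ φ l < s)) :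
    laplaceLIntegral (fun s => Ψ s ^ p) t =
      ENNReal.ofReal (p / t) *
        ∫⁻ l in Ioi 0, ENNReal.ofReal (Real.exp (-(t * φ l))) * ENNReal.ofReal (l ^ (p - 1)) := by
  let m : Measure ℝ :=
    (volume.restrict (Ioi 0)).withDensity fun s => ENNReal.ofReal (Real.exp (-t * s))
  have hm : m ≪ volume.restrict (Ioi 0) := withDensity_absolutelyContinuous _ _
  have hm_pos : ∀ᵐ s ∂m, 0 < s := hm.ae_le (ae_restrict_mem measurableSet_Ioi)
  have h_mass (l : ℝ) (hl : 0 < l) :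
      m {s | l < Ψ s} = ENNReal.ofReal t⁻¹ * ENNReal.ofReal (Real.exp (-(t * φ l))) := by
    have h_ae : {s | l < Ψ s} =ᵐ[m] Ioi (φ l) := by
      filter_upwards [hm_pos] with s hs using propext (hlt l s hl hs)
    rw [measure_congr h_ae, withDensity_apply _ measurableSet_Ioi,
      Measure.restrict_restrict measurableSet_Ioi,
      inter_eq_left.2 (Ioi_subset_Ioi (hφ0 l hl)), ← ofReal_integral_eq_lintegral_ofReal
        (integrableOn_exp_mul_Ioi (neg_lt_zero.2 ht) _) (ae_of_all _ fun _ => (Real.exp_pos _).le),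
      integral_exp_mul_Ioi (neg_lt_zero.2 ht), ← ENNReal.ofReal_mul (by positivity), neg_div_neg_eq,
      div_eq_inv_mul, neg_mul]
  calc
    laplaceLIntegral (fun s => Ψ s ^ p) t = ∫⁻ s, ENNReal.ofReal (Ψ s ^ p) ∂m := by
      rw [lintegral_withDensity_eq_lintegral_mul₀ (by fun_prop) (by fun_prop), laplaceLIntegral]
      simp only [Pi.mul_apply, ENNReal.ofReal_mul (Real.exp_pos _).le, neg_mul]
    _ = ENNReal.ofReal p * ∫⁻ l in Ioi 0, m {s | l < Ψ s} * ENNReal.ofReal (l ^ (p - 1)) :=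
      lintegral_rpow_eq_lintegral_meas_lt_mul m (hm_pos.mono hΨ0) (hΨ.mono_ac hm) hp
    _ = ENNReal.ofReal p * ∫⁻ l in Ioi 0, ENNReal.ofReal t⁻¹ *
          (ENNReal.ofReal (Real.exp (-(t * φ l))) * ENNReal.ofReal (l ^ (p - 1))) := by
      congr 1
      refine setLIntegral_congr_fun measurableSet_Ioi fun l hl => ?_
      rw [h_mass l hl, mul_assoc]
    _ = _ := by
      rw [lintegral_const_mul' _ _ ENNReal.ofReal_ne_top, ← mul_assoc,
        ← ENNReal.ofReal_mul hp.le, div_eq_mul_inv]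

theorem lintegral_lintegral_exp_mul_rpow_sub_one {M : Measure ℝ} [SFinite M] (hp : 0 < p)
    (hM : ∀ᵐ x ∂M, 0 < x) :
    ∫⁻ l in Ioi 0, (∫⁻ x, ENNReal.ofReal (Real.exp (-l * x)) ∂M) * ENNReal.ofReal (l ^ (p - 1)) =
      ENNReal.ofReal (Real.Gamma p) * ∫⁻ x, ENNReal.ofReal (x ^ (-p)) ∂M := by
  simp only [← lintegral_mul_const' _ _ ENNReal.ofReal_ne_top]
  rw [lintegral_lintegral_swap (by fun_prop), ← lintegral_const_mul' _ _ ENNReal.ofReal_ne_top]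
  refine lintegral_congr_ae ?_
  filter_upwards [hM] with x hx
  rw [← ENNReal.ofReal_mul (Real.Gamma_pos_of_pos hp).le, ← laplaceLIntegral_rpow_sub_one hp hx,
    laplaceLIntegral]
  simp only [ENNReal.ofReal_mul (Real.exp_pos _).le, neg_mul, mul_comm x]

theorem HasLaplaceExponent.laplaceLIntegral_rpow {M : Measure ℝ} [SFinite M] (hp : 0 < p)
    (ht : 0 < t) (hM : HasLaplaceExponent M fun l => t * φ l)
    (hΨ : AEMeasurable Ψ (volume.restrict (Ioi 0))) (hΨ0 : ∀ s, 0 < s → 0 ≤ Ψ s)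
    (hφ0 : ∀ l, 0 < l → 0 ≤ φ l) (hlt : ∀ l s, 0 < l → 0 < s → (l < Ψ s ↔ φ l < s)) :
    laplaceLIntegral (fun s => Ψ s ^ p) t =
      ENNReal.ofReal (Real.Gamma (p + 1) / t) * ∫⁻ x, ENNReal.ofReal (x ^ (-p)) ∂M := by
  have h_exponent : ∫⁻ l in Ioi 0,
      ENNReal.ofReal (Real.exp (-(t * φ l))) * ENNReal.ofReal (l ^ (p - 1)) =
      ENNReal.ofReal (Real.Gamma p) * ∫⁻ x, ENNReal.ofReal (x ^ (-p)) ∂M := by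
    rw [← lintegral_lintegral_exp_mul_rpow_sub_one hp hM.ae_pos]
    refine setLIntegral_congr_fun measurableSet_Ioi fun l hl => ?_
    rw [hM.lintegral_exp (le_of_lt hl)]
  rw [laplaceLIntegral_rpow_eq_lintegral_of_lt_iff_lt hp ht hΨ hΨ0 hφ0 hlt, h_exponent,
    ← mul_assoc, ← ENNReal.ofReal_mul (by positivity), Real.Gamma_add_one hp.ne',
    div_mul_eq_mul_div]

end NegativeMoments

section LevyKernel

/-- The kernel `(e^{-su} - 1 + su) / u²`, whose Laplace transform in `s` is
`t ↦ t⁻² (t + u)⁻¹`; it is the jump part of the Lévy–Laplace exponent with Lévy measure `δ_u / u²`,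
fully compensated. -/
noncomputable def levyKernel (s u : ℝ) : ℝ :=
  (Real.exp (-(s * u)) - 1 + s * u) / u ^ 2

theorem exp_neg_sub_one_add_le_sq {x : ℝ} (hx : 0 ≤ x) : Real.exp (-x) - 1 + x ≤ x ^ 2 := by
  have h_exp : Real.exp (-x) ≤ (x + 1)⁻¹ := by
    rw [Real.exp_neg]
    exact inv_anti₀ (by positivity) (Real.add_one_le_exp x)
  have h_inv : (x + 1)⁻¹ ≤ 1 - x + x ^ 2 := by
    rw [inv_le_iff_one_le_mul₀ (by positivity)]
    nlinarith [pow_nonneg hx 3]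
  linarith

theorem measurable_levyKernel : Measurable fun x : ℝ × ℝ => levyKernel x.1 x.2 := by
  unfold levyKernel
  fun_prop

variable {s t u : ℝ}

theorem levyKernel_nonneg (s u : ℝ) : 0 ≤ levyKernel s u :=
  div_nonneg (by linarith [Real.add_one_le_exp (-(s * u))]) (sq_nonneg u)

theorem levyKernel_le (hs : 0 ≤ s) (hu : 0 < u) : levyKernel s u ≤ (s ^ 2 + s) * (1 + u)⁻¹ := by
  have hsu : 0 ≤ s * u := by positivity
  have h_linear : Real.exp (-(s * u)) - 1 + s * u ≤ s * u := by
    linarith [Real.exp_le_one_iff.2 (neg_nonpos.2 hsu)]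
  have h_quadratic := exp_neg_sub_one_add_le_sq hsu
  rw [levyKernel, ← div_eq_mul_inv, div_le_div_iff₀ (by positivity) (by positivity)]
  linarith [mul_le_mul_of_nonneg_right h_linear hu.le]

theorem laplaceLIntegral_levyKernel (ht : 0 < t) (hu : 0 < u) :
    laplaceLIntegral (levyKernel · u) t = ENNReal.ofReal ((t + u)⁻¹ / t ^ 2) := by
  -- No denominators or subtractions, so that every term has a Laplace transform in `[0,∞]`.
  have h_sq_mul (s : ℝ) : u ^ 2 * levyKernel s u + s ^ 0 =
      Real.exp (-(s * u)) * s ^ 0 + u * s ^ 1 := by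
    rw [levyKernel, mul_div_cancel₀ _ (by positivity)]
    ring
  have h := congrFun (congrArg laplaceLIntegral (funext h_sq_mul)) t
  have h_meas : Measurable (levyKernel · u) := measurable_levyKernel.comp measurable_prodMk_right
  rw [laplaceLIntegral_add (h_meas.const_mul _).aemeasurable
      (fun s _ => mul_nonneg (sq_nonneg u) (levyKernel_nonneg s u)) (fun s hs => by positivity),
    laplaceLIntegral_add (by fun_prop) (fun s hs => by positivity) (fun s hs => by positivity),
    laplaceLIntegral_const_mul (sq_nonneg u), laplaceLIntegral_const_mul hu.le,
    laplaceLIntegral_exp_neg_mul, laplaceLIntegral_pow _ ht, laplaceLIntegral_pow _ ht,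
    laplaceLIntegral_pow _ (by positivity)] at h
  have h_cancel : ENNReal.ofReal (u ^ 2) * laplaceLIntegral (levyKernel · u) t =
      ENNReal.ofReal (u ^ 2) * ENNReal.ofReal ((t + u)⁻¹ / t ^ 2) := by
    refine (ENNReal.add_left_inj (ENNReal.ofReal_ne_top (r := (0).factorial / t ^ (0 + 1)))).1 ?_
    rw [h, ← ENNReal.ofReal_mul hu.le, ← ENNReal.ofReal_mul (by positivity),
      ← ENNReal.ofReal_add (by positivity) (by positivity),
      ← ENNReal.ofReal_add (by positivity) (by positivity)]
    congr 1
    simp only [Nat.factorial]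
    field_simp
    push_cast
    ring
  exact (ENNReal.mul_right_inj (by positivity) ENNReal.ofReal_ne_top).1 h_cancel

end LevyKernel

section StieltjesMeasure

/-- `Δ` is the representing measure of a Stieltjes transform: a measure carried by `(0,∞)` that
integrates `(1 + u)⁻¹`. -/
structure IsStieltjesMeasure (Δ : Measure ℝ) : Prop where
  ae_pos : ∀ᵐ u ∂Δ, 0 < u
  integrable : Integrable (fun u => (1 + u)⁻¹) Δ

namespace IsStieltjesMeasure

variable {Δ : Measure ℝ} {s t : ℝ}

theorem sFinite (hΔ : IsStieltjesMeasure Δ) : SFinite Δ := by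
  have := isFiniteMeasure_withDensity_ofReal hΔ.integrable.2
  refine sFinite_of_absolutelyContinuous
    (withDensity_absolutelyContinuous' (f := fun u => ENNReal.ofReal (1 + u)⁻¹) (by fun_prop) ?_)
  filter_upwards [hΔ.ae_pos] with u hu
  exact (ENNReal.ofReal_pos.2 (by positivity)).ne'

theorem integrable_of_norm_le (hΔ : IsStieltjesMeasure Δ) {g : ℝ → ℝ} (hg : Measurable g) (C : ℝ)
    (h : ∀ u, 0 < u → ‖g u‖ ≤ C * (1 + u)⁻¹) : Integrable g Δ :=
  (hΔ.integrable.const_mul C).mono' hg.aestronglyMeasurable (hΔ.ae_pos.mono h)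

theorem integrable_inv_add (hΔ : IsStieltjesMeasure Δ) (ht : 0 < t) :
    Integrable (fun u => (t + u)⁻¹) Δ := by
  refine hΔ.integrable_of_norm_le (by fun_prop) (1 + t⁻¹) fun u hu => ?_
  rw [Real.norm_of_nonneg (by positivity), ← div_eq_mul_inv, inv_eq_one_div,
    div_le_div_iff₀ (by positivity) (by positivity), add_mul, mul_add t⁻¹, inv_mul_cancel₀ ht.ne']
  linarith [mul_pos (inv_pos.2 ht) hu]

theorem integrable_levyKernel (hΔ : IsStieltjesMeasure Δ) (hs : 0 ≤ s) :
    Integrable (levyKernel s) Δ := by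
  refine hΔ.integrable_of_norm_le (measurable_levyKernel.comp measurable_prodMk_left) (s ^ 2 + s)
    fun u hu => ?_
  rw [Real.norm_of_nonneg (levyKernel_nonneg s u)]
  exact levyKernel_le hs hu

theorem integrable_div_one_add_sq (hΔ : IsStieltjesMeasure Δ) :
    Integrable (fun u => u / (1 + u ^ 2)) Δ := by
  refine hΔ.integrable_of_norm_le (by fun_prop) 2 fun u hu => ?_
  rw [Real.norm_of_nonneg (by positivity), ← div_eq_mul_inv,
    div_le_div_iff₀ (by positivity) (by positivity)]
  nlinarith [sq_nonneg (u - 1)]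

theorem integrable_min_sq_one_div_sq (hΔ : IsStieltjesMeasure Δ) :
    Integrable (fun u => min (u ^ 2) 1 / u ^ 2) Δ := by
  refine hΔ.integrable_of_norm_le (by fun_prop) 2 fun u hu => ?_
  rw [Real.norm_of_nonneg (by positivity), ← div_eq_mul_inv,
    div_le_div_iff₀ (by positivity) (by positivity)]
  rcases le_total u 1 with h | h
  · nlinarith [min_le_left (u ^ 2) 1]
  · nlinarith [min_le_right (u ^ 2) 1]

theorem continuousOn_integral_levyKernel (hΔ : IsStieltjesMeasure Δ) :
    ContinuousOn (fun s => ∫ u, levyKernel s u ∂Δ) (Ici 0) := by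
  intro s _
  refine continuousWithinAt_of_dominated
    (bound := fun u => ((s + 1) ^ 2 + (s + 1)) * (1 + u)⁻¹)
    (.of_forall fun r =>
      (measurable_levyKernel.comp measurable_prodMk_left).aestronglyMeasurable) ?_
    (hΔ.integrable.const_mul _) (ae_of_all _ fun u => ?_)
  · filter_upwards [self_mem_nhdsWithin, mem_nhdsWithin_of_mem_nhds (Iic_mem_nhds (lt_add_one s))]
      with r (hr : 0 ≤ r) (hrs : r ≤ s + 1)
    filter_upwards [hΔ.ae_pos] with u hu
    rw [Real.norm_of_nonneg (levyKernel_nonneg r u)]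
    exact (levyKernel_le hr hu).trans (by gcongr)
  · unfold levyKernel
    fun_prop

theorem laplaceLIntegral_integral_levyKernel (hΔ : IsStieltjesMeasure Δ) (ht : 0 < t) :
    laplaceLIntegral (fun s => ∫ u, levyKernel s u ∂Δ) t =
      ENNReal.ofReal ((∫ u, (t + u)⁻¹ ∂Δ) / t ^ 2) := by
  have := hΔ.sFinite
  have h_meas : Measurable fun x : ℝ × ℝ =>
      ENNReal.ofReal (Real.exp (-(t * x.1)) * levyKernel x.1 x.2) := by
    have := measurable_levyKernel
    fun_prop
  calc
    laplaceLIntegral (fun s => ∫ u, levyKernel s u ∂Δ) t =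
        ∫⁻ s in Ioi 0, ∫⁻ u, ENNReal.ofReal (Real.exp (-(t * s)) * levyKernel s u) ∂Δ := by
      refine setLIntegral_congr_fun measurableSet_Ioi fun s hs => ?_
      rw [← integral_const_mul, ofReal_integral_eq_lintegral_ofReal
        ((hΔ.integrable_levyKernel (le_of_lt hs)).const_mul _)
        (ae_of_all _ fun u => mul_nonneg (Real.exp_pos _).le (levyKernel_nonneg s u))]
    _ = ∫⁻ u, laplaceLIntegral (levyKernel · u) t ∂Δ :=
      lintegral_lintegral_swap h_meas.aemeasurable
    _ = ∫⁻ u, ENNReal.ofReal ((t + u)⁻¹ / t ^ 2) ∂Δ := by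
      refine lintegral_congr_ae ?_
      filter_upwards [hΔ.ae_pos] with u hu using laplaceLIntegral_levyKernel ht hu
    _ = ENNReal.ofReal ((∫ u, (t + u)⁻¹ ∂Δ) / t ^ 2) := by
      rw [← integral_div, ofReal_integral_eq_lintegral_ofReal
        ((hΔ.integrable_inv_add ht).div_const _)]
      filter_upwards [hΔ.ae_pos] with u hu
      positivity

end IsStieltjesMeasure

theorem IsStieltjesFn.exists_isStieltjesMeasure {f : ℝ → ℝ} (hf : IsStieltjesFn f) :
    ∃ d q : ℝ, 0 ≤ d ∧ 0 ≤ q ∧ ∃ Δ : Measure ℝ, IsStieltjesMeasure Δ ∧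
      ∀ l, 0 < l → f l = d + q / l + ∫ u, (l + u)⁻¹ ∂Δ := by
  obtain ⟨d, q, hd, hq, Δ, h_supp, h_fin, h_eq⟩ := hf
  have h_pos : ∀ᵐ u ∂Δ, 0 < u := by simpa only [ae_iff, not_lt] using h_supp
  refine ⟨d, q, hd, hq, Δ, ⟨h_pos, ?_⟩, h_eq⟩
  refine (lintegral_ofReal_ne_top_iff_integrable (by fun_prop) ?_).1 h_fin.ne
  filter_upwards [h_pos] with u hu
  positivity

theorem IsStieltjesFn.const_mul {f : ℝ → ℝ} (hf : IsStieltjesFn f) {c : ℝ} (hc : 0 ≤ c) :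
    IsStieltjesFn fun t => c * f t := by
  obtain ⟨d, q, hd, hq, Δ, h_supp, h_fin, h_eq⟩ := hf
  refine ⟨c * d, c * q, by positivity, by positivity, ENNReal.ofReal c • Δ, by simp [h_supp], ?_,
    fun l hl => ?_⟩
  · rw [lintegral_smul_measure]
    exact ENNReal.mul_lt_top ENNReal.ofReal_lt_top h_fin
  · simp only [h_eq l hl]
    rw [integral_smul_measure, ENNReal.toReal_ofReal hc, smul_eq_mul]
    ring

end StieltjesMeasure

section LevyLaplaceExponent

/-- `f` is a Lévy–Laplace exponent vanishing at `0`: it belongs to the class `Lle(0,∞)` with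
`α = 0`. Only the values of `f` on `[0,∞)` matter. -/
def IsLevyLaplaceExponent (f : ℝ → ℝ) : Prop :=
  ∃ β γ : ℝ, 0 ≤ γ ∧ ∃ ν : Measure ℝ, ν {x | x ≤ 0} = 0 ∧
    (∫⁻ x, ENNReal.ofReal (min (x ^ 2) 1) ∂ν) < ⊤ ∧
    ∀ l : ℝ, 0 ≤ l →
      f l = β * l + γ ^ 2 / 2 * l ^ 2 +
        ∫ x, (Real.exp (-l * x) - 1 + l * x / (1 + x ^ 2)) ∂ν

theorem IsLevyLaplaceExponent.congr {f g : ℝ → ℝ} (hf : IsLevyLaplaceExponent f)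
    (h : EqOn f g (Ici 0)) : IsLevyLaplaceExponent g := by
  obtain ⟨β, γ, hγ, ν, h_supp, h_fin, h_eq⟩ := hf
  exact ⟨β, γ, hγ, ν, h_supp, h_fin, fun l hl => (h hl).symm.trans (h_eq l hl)⟩

/-- The Lévy–Laplace exponent attached to the Stieltjes transform
`d + q/t + ∫ (t + u)⁻¹ Δ(du)`: its Laplace transform is that transform divided by `t²`. -/
noncomputable def stieltjesLevyExponent (d q : ℝ) (Δ : Measure ℝ) (s : ℝ) : ℝ :=
  d * s + q / 2 * s ^ 2 + ∫ u, levyKernel s u ∂Δ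

variable {d q t : ℝ} {Δ : Measure ℝ}

theorem stieltjesLevyExponent_nonneg (hd : 0 ≤ d) (hq : 0 ≤ q) {s : ℝ} (hs : 0 ≤ s) :
    0 ≤ stieltjesLevyExponent d q Δ s := by
  have : 0 ≤ ∫ u, levyKernel s u ∂Δ := integral_nonneg (levyKernel_nonneg s)
  unfold stieltjesLevyExponent
  positivity

namespace IsStieltjesMeasure

theorem continuousOn_stieltjesLevyExponent (hΔ : IsStieltjesMeasure Δ) :
    ContinuousOn (stieltjesLevyExponent d q Δ) (Ici 0) :=
  ContinuousOn.add (by fun_prop) hΔ.continuousOn_integral_levyKernel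

theorem laplaceLIntegral_stieltjesLevyExponent (hΔ : IsStieltjesMeasure Δ) (hd : 0 ≤ d)
    (hq : 0 ≤ q) (ht : 0 < t) :
    laplaceLIntegral (stieltjesLevyExponent d q Δ) t =
      ENNReal.ofReal ((d + q / t + ∫ u, (t + u)⁻¹ ∂Δ) / t ^ 2) := by
  have h_inv_nonneg : 0 ≤ ∫ u, (t + u)⁻¹ ∂Δ := by
    refine integral_nonneg_of_ae ?_
    filter_upwards [hΔ.ae_pos] with u hu
    positivity
  have h_split : stieltjesLevyExponent d q Δ =
      fun s => d * s ^ 1 + q / 2 * s ^ 2 + ∫ u, levyKernel s u ∂Δ := by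
    simp only [pow_one]
    rfl
  rw [h_split, laplaceLIntegral_add (by fun_prop) (fun s hs => by positivity)
      (fun s _ => integral_nonneg (levyKernel_nonneg s)),
    laplaceLIntegral_add (by fun_prop) (fun s hs => by positivity) (fun s hs => by positivity),
    laplaceLIntegral_const_mul hd, laplaceLIntegral_const_mul (by positivity),
    laplaceLIntegral_pow _ ht, laplaceLIntegral_pow _ ht,
    hΔ.laplaceLIntegral_integral_levyKernel ht, ← ENNReal.ofReal_mul hd,
    ← ENNReal.ofReal_mul (by positivity), ← ENNReal.ofReal_add (by positivity) (by positivity),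
    ← ENNReal.ofReal_add (by positivity) (by positivity)]
  congr 1
  simp only [Nat.factorial]
  push_cast
  field_simp

theorem lintegral_min_sq_one_withDensity_lt_top (hΔ : IsStieltjesMeasure Δ) :
    ∫⁻ x, ENNReal.ofReal (min (x ^ 2) 1) ∂(Δ.withDensity fun u => ENNReal.ofReal (u ^ 2)⁻¹) <
      ∞ := by
  rw [lintegral_withDensity_eq_lintegral_mul _ (by fun_prop) (by fun_prop)]
  refine (lintegral_congr fun u => ?_).trans_lt hΔ.integrable_min_sq_one_div_sq.lintegral_lt_top
  rw [Pi.mul_apply, ← ENNReal.ofReal_mul (by positivity), inv_mul_eq_div]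

theorem integral_compensated_exp_withDensity (hΔ : IsStieltjesMeasure Δ) {l : ℝ} (hl : 0 ≤ l) :
    ∫ x, (Real.exp (-l * x) - 1 + l * x / (1 + x ^ 2))
        ∂(Δ.withDensity fun u => ENNReal.ofReal (u ^ 2)⁻¹) =
      ∫ u, levyKernel l u ∂Δ - l * ∫ u, u / (1 + u ^ 2) ∂Δ := by
  rw [integral_withDensity_eq_integral_toReal_smul (by fun_prop)
      (ae_of_all _ fun _ => ENNReal.ofReal_lt_top), ← integral_const_mul,
    ← integral_sub (hΔ.integrable_levyKernel hl) (hΔ.integrable_div_one_add_sq.const_mul l)]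
  refine integral_congr_ae ?_
  filter_upwards [hΔ.ae_pos] with u hu
  rw [ENNReal.toReal_ofReal (by positivity), levyKernel, smul_eq_mul, neg_mul]
  field_simp
  ring

theorem isLevyLaplaceExponent_stieltjesLevyExponent (hΔ : IsStieltjesMeasure Δ) (hq : 0 ≤ q) :
    IsLevyLaplaceExponent (stieltjesLevyExponent d q Δ) := by
  refine ⟨d + ∫ u, u / (1 + u ^ 2) ∂Δ, √q, Real.sqrt_nonneg q,
    Δ.withDensity fun u => ENNReal.ofReal (u ^ 2)⁻¹, withDensity_absolutelyContinuous _ _ ?_,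
    hΔ.lintegral_min_sq_one_withDensity_lt_top, fun l hl => ?_⟩
  · simpa only [ae_iff, not_lt] using hΔ.ae_pos
  · rw [hΔ.integral_compensated_exp_withDensity hl, Real.sq_sqrt hq, stieltjesLevyExponent]
    ring

end IsStieltjesMeasure

theorem IsStieltjesFn.isLevyLaplaceExponent_of_laplaceLIntegral_eq {f F : ℝ → ℝ}
    (hf : IsStieltjesFn f) (hF : ContinuousOn F (Ici 0)) (hF0 : ∀ s, 0 < s → 0 ≤ F s)
    (h : ∀ t, 0 < t → laplaceLIntegral F t = ENNReal.ofReal (f t / t ^ 2)) :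
    IsLevyLaplaceExponent F := by
  obtain ⟨d, q, hd, hq, Δ, hΔ, hf_eq⟩ := hf.exists_isStieltjesMeasure
  have h_ne_top : ∀ᶠ t in 𝓝 1, laplaceLIntegral F t ≠ ∞ := by
    filter_upwards [Ioi_mem_nhds zero_lt_one] with t ht
    rw [h t ht]
    exact ENNReal.ofReal_ne_top
  have h_transform : laplaceLIntegral F =ᶠ[𝓝 1] laplaceLIntegral (stieltjesLevyExponent d q Δ) := by
    filter_upwards [Ioi_mem_nhds zero_lt_one] with t ht
    rw [h t ht, hf_eq t ht, hΔ.laplaceLIntegral_stieltjesLevyExponent hd hq ht]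
  have h_eqOn : EqOn F (stieltjesLevyExponent d q Δ) (Ici 0) :=
    eqOn_Ici_of_laplaceLIntegral_eventuallyEq hF hΔ.continuousOn_stieltjesLevyExponent hF0
      (fun s hs => stieltjesLevyExponent_nonneg hd hq hs.le) h_ne_top h_transform
  exact (hΔ.isLevyLaplaceExponent_stieltjesLevyExponent hq).congr h_eqOn.symm

end LevyLaplaceExponent

theorem stmt_11_general {p : ℝ} (hp : 0 < p) {φ Ψ : ℝ → ℝ} (hinv : InvOn Ψ φ (Ici 0) (Ici 0))
    {μ : ℝ → Measure ℝ} (hprob : ∀ t, 0 < t → IsProbabilityMeasure (μ t))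
    (hμ : ∀ t, 0 < t → HasLaplaceExponent (μ t) fun l => t * φ l)
    (hfin : ∀ t, 0 < t → ∫⁻ x, ENNReal.ofReal (x ^ (-p)) ∂(μ t) ≠ ∞)
    (hstieltjes :
      IsStieltjesFn (fun t => t * (∫⁻ x, ENNReal.ofReal (x ^ (-p)) ∂(μ t)).toReal)) :
    IsLevyLaplaceExponent fun l => Ψ l ^ p := by
  have := hprob 1 one_pos
  have hφ : HasLaplaceExponent (μ 1) φ := by simpa only [one_mul] using hμ 1 one_pos
  have hφ_bij : BijOn φ (Ici 0) (Ici 0) := ⟨hφ.mapsTo, hinv.1.injOn, hφ.surjOn⟩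
  have hφ_strict : StrictMonoOn φ (Ici 0) := hφ.monotoneOn.strictMonoOn_of_injOn hinv.1.injOn
  have hΨ_mapsTo : MapsTo Ψ (Ici 0) (Ici 0) := (hφ_bij.symm hinv.symm).mapsTo
  have hΨ_cont : ContinuousOn Ψ (Ici 0) :=
    continuousOn_of_strictMonoOn_of_invOn hφ_strict hφ_bij hinv
  have h_lt_iff (l s : ℝ) (hl : 0 < l) (hs : 0 < s) : l < Ψ s ↔ φ l < s := by
    rw [← hφ_strict.lt_iff_lt (le_of_lt hl) (hΨ_mapsTo (le_of_lt hs)), hinv.2 (le_of_lt hs)]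
  have hΓ : 0 < Real.Gamma (p + 1) := Real.Gamma_pos_of_pos (by positivity)
  refine (hstieltjes.const_mul hΓ.le).isLevyLaplaceExponent_of_laplaceLIntegral_eq
    (hΨ_cont.rpow_const fun _ _ => .inr hp.le)
    (fun s hs => Real.rpow_nonneg (hΨ_mapsTo (le_of_lt hs)) p) fun t ht => ?_
  have := hprob t ht
  rw [(hμ t ht).laplaceLIntegral_rpow hp ht
      ((hΨ_cont.mono Ioi_subset_Ici_self).aemeasurable measurableSet_Ioi)
      (fun s hs => hΨ_mapsTo (le_of_lt hs)) (fun l hl => hφ.mapsTo (le_of_lt hl)) h_lt_iff,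
    ← ENNReal.ofReal_toReal (hfin t ht), ← ENNReal.ofReal_mul (by positivity),
    ENNReal.toReal_ofReal ENNReal.toReal_nonneg]
  congr 1
  field_simp

/-- Let `p ≥ 1`, let `φ` be a Bernstein function with `φ(0) = 0`,
`φ(∞) = ∞`, inverse `Ψ`, and marginal subordinator laws `(μ_t)_{t>0}`. If
`t ↦ t·∫ x^{−p} μ_t(dx)` is a Stieltjes transform on `(0,∞)`, then `Ψ^p ∈ Lle(0,∞)`:
`Ψ(λ)^p = βλ + (γ²/2)λ² + ∫_{(0,∞)} (e^{−λx} − 1 + λx/(1+x²)) ν(dx)` for some `γ ≥ 0`,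
`β ∈ ℝ` and a measure `ν` on `(0,∞)` with `∫ min(x²,1) ν(dx) < ∞`. -/
theorem stmt_11 (p : ℝ) (hp : 1 ≤ p) (φ Ψ : ℝ → ℝ) (hφ : IsBernsteinFn φ)
    (h0 : φ 0 = 0) (hinf : Tendsto φ atTop atTop) (hinv : Set.InvOn Ψ φ (Ici 0) (Ici 0))
    (μ : ℝ → Measure ℝ) (hprob : ∀ t : ℝ, 0 < t → IsProbabilityMeasure (μ t))
    (hsupp : ∀ t : ℝ, 0 < t → μ t {x | x ≤ 0} = 0)
    (hlaplace : ∀ t : ℝ, 0 < t → ∀ l : ℝ, 0 ≤ l →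
      ∫ x, Real.exp (-l * x) ∂(μ t) = Real.exp (-t * φ l))
    (hfin : ∀ t : ℝ, 0 < t → ∫⁻ x, ENNReal.ofReal (x ^ (-p)) ∂(μ t) ≠ ⊤)
    (hstieltjes :
      IsStieltjesFn (fun t => t * (∫⁻ x, ENNReal.ofReal (x ^ (-p)) ∂(μ t)).toReal)) :
    ∃ β γ : ℝ, 0 ≤ γ ∧ ∃ ν : Measure ℝ, ν {x | x ≤ 0} = 0 ∧
      (∫⁻ x, ENNReal.ofReal (min (x ^ 2) 1) ∂ν) < ⊤ ∧
      ∀ l : ℝ, 0 ≤ l →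
        Ψ l ^ p = β * l + γ ^ 2 / 2 * l ^ 2 +
          ∫ x, (Real.exp (-l * x) - 1 + l * x / (1 + x ^ 2)) ∂ν := by
  exact stmt_11_general (by positivity) hinv hprob
    (fun t ht => ⟨by simpa only [ae_iff, not_lt] using hsupp t ht,
      fun l hl => by rw [hlaplace t ht l hl, neg_mul]⟩) hfin hstieltjes
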